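/- Let T be a tree. Then the following statements are equivalent: (i) the vertex set V(T) is countable; (ii) there exists a non-degenerate labeling l : V(T) → ℝ≥0 for which the ultrametric space (V(T), d_l) is locally finite. -/

import Mathlib

open SimpleGraph

/-- For a tree `G` with labeling `l`, the "ultrametric" `d_l`: the maximum of the labels of the
vertices of the unique path joining `u` and `v` (and `0` if `u = v`). -/
noncomputable def treeDist {V : Type*} (G : SimpleGraph V) (hG : G.IsTree) (l : V → NNReal)
    (u v : V) : NNReal :=
  letI := Classical.decEq V
  if u = v then 0 else ((hG.existsUnique_path u v).choose.support.map l).foldr max 0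

/-- A labeling is non-degenerate if `max {l u, l v} > 0` for every edge `{u, v}`. -/
def Nondeg {V : Type*} (G : SimpleGraph V) (l : V → NNReal) : Prop :=
  ∀ u v : V, G.Adj u v → 0 < max (l u) (l v)

/-- A distance function is separable if there is a countable dense subset. -/
def SeparableWith {α : Type*} (d : α → α → NNReal) : Prop :=
  ∃ S : Set α, S.Countable ∧ ∀ x : α, ∀ ε : NNReal, 0 < ε → ∃ s ∈ S, d x s < ε

/-- A set is bounded if it is contained in a closed ball of positive radius. -/
def BoundedWith {α : Type*} (d : α → α → NNReal) (A : Set α) : Prop :=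
  ∃ c : α, ∃ r : NNReal, 0 < r ∧ ∀ x ∈ A, d c x ≤ r

/-- A distance function is locally finite if every bounded set is finite. -/
def LocallyFiniteWith {α : Type*} (d : α → α → NNReal) : Prop :=
  ∀ A : Set α, BoundedWith d A → A.Finite

/-- A graph is a ray if its vertices can be enumerated without repetition as
`x₁, x₂, …` with edges exactly `{xₙ, xₙ₊₁}`. -/
def IsRay {W : Type*} (R : SimpleGraph W) : Prop :=
  ∃ v : ℕ → W, Function.Bijective v ∧
    ∀ a b : W, R.Adj a b ↔ ∃ n : ℕ, (a = v n ∧ b = v (n + 1)) ∨ (a = v (n + 1) ∧ b = v n)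

/-- A tree is a star graph if some vertex `c` (the center) is adjacent to every other vertex. -/
def IsStar {W : Type*} (S : SimpleGraph W) : Prop :=
  S.IsTree ∧ ∃ c : W, ∀ v : W, v ≠ c → S.Adj c v

theorem le_foldr_max_of_mem (L : List NNReal) (a : NNReal) (h : a ∈ L) :
    a ≤ L.foldr max 0 := by
  induction L with
  | nil => simp at h
  | cons b L ih =>
    rw [List.foldr_cons]
    rcases List.mem_cons.1 h with h | h
    · exact h ▸ le_max_left _ _
    · exact (ih h).trans (le_max_right _ _)

theorem countable_iff_exists_locallyFinite {V : Type*} (G : SimpleGraph V)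
    (hG : G.IsTree) :
    Countable V ↔
      ∃ l : V → NNReal, Nondeg G l ∧ LocallyFiniteWith (treeDist G hG l) := by
  constructor
  · intro hV
    obtain ⟨f, hf⟩ := exists_injective_nat V
    refine ⟨fun v => (f v : NNReal) + 1, ?_, ?_⟩
    · intro u v _
      exact lt_max_of_lt_left (by positivity)
    · rintro A ⟨c, r, _, hA⟩
      have hfin : (insert c (f ⁻¹' Set.Iic ⌈r⌉₊)).Finite :=
        ((Set.finite_Iic _).preimage hf.injOn).insert c
      refine hfin.subset ?_
      intro x hx
      by_cases hcx : c = x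
      · exact Or.inl hcx.symm
      · right
        have h1 := hA x hx
        unfold treeDist at h1
        rw [if_neg hcx] at h1
        have h2 := (le_foldr_max_of_mem _ ((f x : NNReal) + 1)
          (List.mem_map.2 ⟨x, Walk.end_mem_support _, rfl⟩)).trans h1
        have h3 : (f x : NNReal) ≤ (⌈r⌉₊ : NNReal) :=
          (le_self_add.trans h2).trans (Nat.le_ceil r)
        exact_mod_cast h3
  · rintro ⟨l, _, hl⟩
    obtain ⟨c⟩ := hG.connected.nonempty
    rw [← Set.countable_univ_iff]
    have h : (Set.univ : Set V) = ⋃ n : ℕ, {x | treeDist G hG l c x ≤ (n : NNReal) + 1} := by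
      symm
      rw [Set.eq_univ_iff_forall]
      intro x
      obtain ⟨n, hn⟩ := exists_nat_ge (treeDist G hG l c x)
      exact Set.mem_iUnion.2 ⟨n, hn.trans le_self_add⟩
    rw [h]
    exact Set.countable_iUnion fun n =>
      (hl _ ⟨c, (n : NNReal) + 1, by positivity, fun x hx => hx⟩).countable
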